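/- Let Ω ⊆ ℝ² be open and simply connected, let α : Ω → ℝ² be smooth, and let S ⊆ Ω × ℝ² be its graph. Then α is the derivative of a smooth solution u : Ω → ℝ of det(Hess u) = 1 (up to sign of the determinant condition det(Dα) = ±1 with det(Dα)=1) if and only if S is a J-holomorphic curve, where J is the complex structure on ℝ²⊕ℝ² given in block form by J((x,y)) = (J₀y, J₀x). Equivalently, S is J-holomorphic if and only if the 1-form α is closed and det(Dα) = 1. -/

import Mathlib

/-- The standard complex structure `J₀` on `ℝ²`, rotation by `π/2`. -/
def J0 : ℝ × ℝ → ℝ × ℝ := fun v => (-v.2, v.1)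

/-!
Since `Aᵀ J₀ A = det A • J₀`, a symmetric `A` satisfies `A J₀ A = J₀` exactly when `det A = 1`, and
comparing entries shows that `A J₀ A = J₀` forces symmetry. For `A = Dα`, symmetry says that the
1-form `α₁ dx + α₂ dy` is closed.

A closed 1-form has primitives on balls. Their germs form the total space of a covering of `Ω`, the
fibres being torsors under the constants; as `Ω` is simply connected, the covering has a global
section, which is a primitive on `Ω`.
-/

open Bundle Set Topology

section Gluing

variable {B : Type*} [TopologicalSpace B] [SimplyConnectedSpace B] [LocallyPathConnectedSpace B]

theorem exists_rightInverse_of_isCoveringMap {E : Type*} [TopologicalSpace E] [Nonempty E]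
    {p : E → B} (hp : IsCoveringMap p) : ∃ s : C(B, E), Function.RightInverse s p := by
  obtain ⟨e₀⟩ := ‹Nonempty E›
  obtain ⟨s, ⟨-, hs⟩, -⟩ := hp.existsUnique_continuousMap_lifts (.id B) (p e₀) e₀ rfl
  exact ⟨s, congrFun hs⟩

theorem exists_compatible_local_sections {ι F : Type*} [TopologicalSpace F] [DiscreteTopology F]
    [Nonempty F] (Z : FiberBundleCore ι B F) :
    ∃ g : ι → B → F, (∀ i, ContinuousOn (g i) (Z.baseSet i)) ∧
      ∀ i j, ∀ x ∈ Z.baseSet i ∩ Z.baseSet j, Z.coordChange i j x (g i x) = g j x := by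
  obtain ⟨b⟩ : Nonempty B := inferInstance
  obtain ⟨v⟩ := ‹Nonempty F›
  have : Nonempty (TotalSpace F Z.Fiber) := ⟨⟨b, v⟩⟩
  obtain ⟨s, hs⟩ := exists_rightInverse_of_isCoveringMap
    (FiberBundle.isCoveringMap (F := F) (E := Z.Fiber))
  refine ⟨fun i x ↦ (Z.localTriv i (s x)).2, fun i ↦ ?_, fun i j x hx ↦ ?_⟩
  · refine continuous_snd.comp_continuousOn
      ((Z.localTriv i).continuousOn.comp s.continuous.continuousOn fun x hx ↦ ?_)
    rwa [Trivialization.mem_source, hs x]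
  · rw [← hs x] at hx
    convert! Z.coordChange_comp _ i j _ ⟨⟨Z.mem_baseSet_at _, hx.1⟩, hx.2⟩ (s x).snd
    exact (hs x).symm

-- The constants by which a solution differs from the `f i` form a section of a covering of `B`.
theorem exists_eventuallyEq_add_const_of_cover {ι G : Type*} [AddGroup G] {U : ι → Set B}
    (hU : ∀ i, IsOpen (U i)) (hcov : ∀ x, ∃ i, x ∈ U i) {f : ι → B → G}
    (hf : ∀ i j, ∀ x ∈ U i ∩ U j, ∃ c, f i =ᶠ[𝓝 x] (f j · + c)) :
    ∃ u : B → G, ∀ i, ∀ x ∈ U i, ∃ c, u =ᶠ[𝓝 x] (f i · + c) := by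
  choose k hk using hcov
  let _ : TopologicalSpace G := ⊥
  have : DiscreteTopology G := ⟨rfl⟩
  let Z : FiberBundleCore ι B G :=
    { baseSet := U
      isOpen_baseSet := hU
      indexAt := k
      mem_baseSet_at := hk
      coordChange := fun i j x v ↦ -f j x + (f i x + v)
      coordChange_self := fun i x _ v ↦ neg_add_cancel_left _ _
      continuousOn_coordChange := by
        rintro i j ⟨x, v⟩ ⟨hx, -⟩
        obtain ⟨c, hc⟩ := hf i j x hx
        have hadd : Continuous fun p : B × G ↦ c + p.2 := by fun_prop
        refine (hadd.continuousAt.congr ?_).continuousWithinAt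
        filter_upwards [continuousAt_fst.eventually hc] with p hp
        rw [hp, add_assoc, neg_add_cancel_left]
      coordChange_comp := fun i j l x _ v ↦ by rw [add_neg_cancel_left] }
  obtain ⟨g, hg, hcompat⟩ := exists_compatible_local_sections Z
  refine ⟨fun x ↦ f (k x) x + g (k x) x, fun i x hx ↦ ⟨g i x, ?_⟩⟩
  have hconst : ∀ᶠ y in 𝓝 x, g i y = g i x :=
    ((hg i).continuousAt ((hU i).mem_nhds hx)).eventually_mem
      (mem_nhds_discrete.2 (mem_singleton (g i x)))
  filter_upwards [hconst, (hU i).mem_nhds hx] with y hy hyU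
  rw [← hcompat i (k y) y ⟨hyU, hk y⟩, add_neg_cancel_left, hy]

theorem exists_eventuallyEq_add_const_of_isOpen {X ι G : Type*} [TopologicalSpace X] [AddGroup G]
    {s : Set X} (hs : IsOpen s) [SimplyConnectedSpace s] [LocallyPathConnectedSpace s]
    {U : ι → Set X} (hU : ∀ i, IsOpen (U i)) (hcov : ∀ x ∈ s, ∃ i, x ∈ U i) {f : ι → X → G}
    (hf : ∀ i j, ∀ x ∈ s ∩ (U i ∩ U j), ∃ c, f i =ᶠ[𝓝 x] (f j · + c)) :
    ∃ u : X → G, ∀ i, ∀ x ∈ s ∩ U i, ∃ c, u =ᶠ[𝓝 x] (f i · + c) := by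
  obtain ⟨u, hu⟩ := exists_eventuallyEq_add_const_of_cover (B := s)
    (U := fun i ↦ Subtype.val ⁻¹' U i) (f := fun i x ↦ f i x)
    (fun i ↦ (hU i).preimage continuous_subtype_val) (fun x ↦ hcov x x.2) fun i j x hx ↦ by
      obtain ⟨c, hc⟩ := hf i j x ⟨x.2, hx⟩
      exact ⟨c, continuousAt_subtype_val.eventually hc⟩
  refine ⟨Function.extend (↑) u 0, fun i x ⟨hxs, hxU⟩ ↦ ?_⟩
  obtain ⟨c, hc⟩ := hu i ⟨x, hxs⟩ hxU
  refine ⟨c, ?_⟩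
  rw [Filter.EventuallyEq, ← hs.isOpenEmbedding_subtypeVal.map_nhds_eq ⟨x, hxs⟩,
    Filter.eventually_map]
  filter_upwards [hc] with y hy
  rw [Subtype.val_injective.extend_apply, hy]

end Gluing

section Primitive

variable {E F : Type*} [NormedAddCommGroup E] [NormedSpace ℝ E] [NormedAddCommGroup F]
  [NormedSpace ℝ F]

theorem exists_eventuallyEq_add_const_of_hasFDerivAt {f g : E → F} {ω : E → E →L[ℝ] F} {p : E}
    (hf : ∀ᶠ a in 𝓝 p, HasFDerivAt f (ω a) a) (hg : ∀ᶠ a in 𝓝 p, HasFDerivAt g (ω a) a) :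
    ∃ c, f =ᶠ[𝓝 p] (g · + c) := by
  obtain ⟨r, hr, hball⟩ := Metric.eventually_nhds_iff_ball.1 (hf.and hg)
  obtain ⟨c, hc⟩ := Metric.isOpen_ball.exists_eq_add_of_fderiv_eq (convex_ball p r).isPreconnected
    (fun a ha ↦ (hball a ha).1.differentiableAt.differentiableWithinAt)
    (fun a ha ↦ (hball a ha).2.differentiableAt.differentiableWithinAt)
    (fun a ha ↦ (hball a ha).1.fderiv.trans (hball a ha).2.fderiv.symm)
  exact ⟨c, hc.eventuallyEq_of_mem (Metric.ball_mem_nhds p hr)⟩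

theorem exists_forall_hasFDerivAt_of_local {Ω : Set E} (hΩ : IsOpen Ω) [SimplyConnectedSpace Ω]
    {ω : E → E →L[ℝ] F} (hω : ∀ p ∈ Ω, ∃ f : E → F, ∀ᶠ a in 𝓝 p, HasFDerivAt f (ω a) a) :
    ∃ u : E → F, ∀ p ∈ Ω, HasFDerivAt u (ω p) p := by
  have : LocallyPathConnectedSpace Ω := hΩ.locallyPathConnectedSpace
  choose! f hf using hω
  let U : E → Set E := fun p ↦ interior {a | HasFDerivAt (f p) (ω a) a}
  have hUself : ∀ p ∈ Ω, p ∈ U p := fun p hp ↦ mem_interior_iff_mem_nhds.2 (hf p hp)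
  obtain ⟨u, hu⟩ := exists_eventuallyEq_add_const_of_isOpen hΩ (U := U) (f := f)
    (fun _ ↦ isOpen_interior) (fun p hp ↦ ⟨p, hUself p hp⟩) fun p q a ha ↦
      exists_eventuallyEq_add_const_of_hasFDerivAt
        (mem_interior_iff_mem_nhds.1 ha.2.1) (mem_interior_iff_mem_nhds.1 ha.2.2)
  refine ⟨u, fun p hp ↦ ?_⟩
  obtain ⟨c, hc⟩ := hu p p ⟨hp, hUself p hp⟩
  exact ((hf p hp).self_of_nhds.add_const c).congr_of_eventuallyEq hc

theorem exists_forall_hasFDerivAt_of_fderiv_symmetric [CompleteSpace F] {Ω : Set E} (hΩ : IsOpen Ω)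
    [SimplyConnectedSpace Ω] {ω : E → E →L[ℝ] F} (hω : DifferentiableOn ℝ ω Ω)
    (hdω : ∀ p ∈ Ω, ∀ x y, fderiv ℝ ω p x y = fderiv ℝ ω p y x) :
    ∃ u : E → F, ∀ p ∈ Ω, HasFDerivAt u (ω p) p := by
  refine exists_forall_hasFDerivAt_of_local hΩ fun p hp ↦ ?_
  obtain ⟨r, hr, hsub⟩ := Metric.isOpen_iff.1 hΩ p hp
  obtain ⟨f, hf⟩ := (convex_ball p r).exists_forall_hasFDerivAt_of_fderiv_symmetric
    Metric.isOpen_ball (hω.mono hsub) fun a ha ↦ hdω a (hsub ha)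
  exact ⟨f, Metric.eventually_nhds_iff_ball.2 ⟨r, hr, hf⟩⟩

theorem exists_contDiffOn_fderiv_eq_iff [CompleteSpace F] {Ω : Set E} (hΩ : IsOpen Ω)
    [SimplyConnectedSpace Ω] {n : ℕ∞} (hn : n ≠ 0) {ω : E → E →L[ℝ] F} (hω : ContDiffOn ℝ n ω Ω) :
    (∃ u : E → F, ContDiffOn ℝ (n + 1) u Ω ∧ ∀ p ∈ Ω, fderiv ℝ u p = ω p) ↔
      ∀ p ∈ Ω, ∀ x y, fderiv ℝ ω p x y = fderiv ℝ ω p y x := by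
  have hωd : DifferentiableOn ℝ ω Ω := hω.differentiableOn (mod_cast hn)
  constructor
  · rintro ⟨u, hu, hderiv⟩ p hp
    have hu' : ∀ᶠ q in 𝓝 p, HasFDerivAt u (ω q) q := by
      filter_upwards [hΩ.mem_nhds hp] with q hq
      rw [← hderiv q hq]
      exact ((hu.differentiableOn (by simp)).differentiableAt (hΩ.mem_nhds hq)).hasFDerivAt
    exact second_derivative_symmetric_of_eventually hu'
      (hωd.differentiableAt (hΩ.mem_nhds hp)).hasFDerivAt
  · intro hclosed
    obtain ⟨u, hu⟩ := exists_forall_hasFDerivAt_of_fderiv_symmetric hΩ hωd hclosed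
    have hderiv : ∀ p ∈ Ω, fderiv ℝ u p = ω p := fun p hp ↦ (hu p hp).fderiv
    refine ⟨u, (contDiffOn_succ_iff_fderiv_of_isOpen hΩ).2 ⟨?_, by simp, hω.congr hderiv⟩, hderiv⟩
    exact fun p hp ↦ (hu p hp).differentiableAt.differentiableWithinAt

end Primitive

section Coordinates

theorem clm_prod_apply {R M : Type*} [Semiring R] [TopologicalSpace R] [AddCommMonoid M]
    [TopologicalSpace M] [Module R M] (A : R × R →L[R] M) (v : R × R) :
    A v = v.1 • A (1, 0) + v.2 • A (0, 1) := by
  rw [← map_smul, ← map_smul, ← map_add]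
  simp

variable {𝕜 : Type*} [NontriviallyNormedField 𝕜]

variable (𝕜) in
/-- The identification of `𝕜 × 𝕜` with its dual, sending `(a, b)` to the covector `a dx + b dy`. -/
noncomputable def covectorEquiv : (𝕜 × 𝕜) ≃L[𝕜] (𝕜 × 𝕜 →L[𝕜] 𝕜) :=
  (ContinuousLinearMap.toSpanSingletonCLE.prodCongr ContinuousLinearMap.toSpanSingletonCLE).trans
    (ContinuousLinearMap.coprodEquivL 𝕜)

theorem covectorEquiv_apply (a v : 𝕜 × 𝕜) : covectorEquiv 𝕜 a v = a.1 * v.1 + a.2 * v.2 := by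
  simp [covectorEquiv, mul_comm]

theorem eq_covectorEquiv_iff {ℓ : 𝕜 × 𝕜 →L[𝕜] 𝕜} {a : 𝕜 × 𝕜} :
    ℓ = covectorEquiv 𝕜 a ↔ a = (ℓ (1, 0), ℓ (0, 1)) := by
  constructor
  · rintro rfl
    simp [covectorEquiv_apply]
  · rintro rfl
    ext <;> simp [covectorEquiv_apply]

theorem forall_apply_comm_iff {F : Type*} [AddCommGroup F] [Module 𝕜 F] [TopologicalSpace F]
    [IsTopologicalAddGroup F] [ContinuousConstSMul 𝕜 F] (B : 𝕜 × 𝕜 →L[𝕜] 𝕜 × 𝕜 →L[𝕜] F) :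
    (∀ x y, B x y = B y x) ↔ B (1, 0) (0, 1) = B (0, 1) (1, 0) := by
  refine ⟨fun h ↦ h _ _, fun h x y ↦ ?_⟩
  rw [clm_prod_apply B x, clm_prod_apply B y]
  simp only [add_apply, smul_apply, clm_prod_apply (B _) x, clm_prod_apply (B _) y, h]
  module

theorem exists_gradient_eq_iff {Ω : Set (ℝ × ℝ)} (hΩ : IsOpen Ω) [SimplyConnectedSpace Ω]
    {n : ℕ∞} (hn : n ≠ 0) {α : ℝ × ℝ → ℝ × ℝ} (hα : ContDiffOn ℝ n α Ω) :
    (∃ u : ℝ × ℝ → ℝ, ContDiffOn ℝ (n + 1) u Ω ∧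
        ∀ p ∈ Ω, α p = (fderiv ℝ u p (1, 0), fderiv ℝ u p (0, 1))) ↔
      ∀ p ∈ Ω, (fderiv ℝ α p (1, 0)).2 = (fderiv ℝ α p (0, 1)).1 := by
  have hω : ContDiffOn ℝ n (covectorEquiv ℝ ∘ α) Ω :=
    (covectorEquiv ℝ).contDiff.comp_contDiffOn hα
  have hclosed : ∀ p, (∀ x y, fderiv ℝ (covectorEquiv ℝ ∘ α) p x y =
      fderiv ℝ (covectorEquiv ℝ ∘ α) p y x) ↔
        (fderiv ℝ α p (1, 0)).2 = (fderiv ℝ α p (0, 1)).1 := by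
    intro p
    rw [forall_apply_comm_iff, ContinuousLinearEquiv.comp_fderiv]
    simp [covectorEquiv_apply]
  simp only [← hclosed, ← exists_contDiffOn_fderiv_eq_iff hΩ hn hω, Function.comp_apply,
    eq_covectorEquiv_iff]

end Coordinates

section LinearAlgebra

variable {A : ℝ × ℝ →L[ℝ] ℝ × ℝ}

theorem apply_J0_apply_of_symm (hA : (A (1, 0)).2 = (A (0, 1)).1) (v : ℝ × ℝ) :
    A (J0 (A v)) = ((A (1, 0)).1 * (A (0, 1)).2 - (A (0, 1)).1 * (A (1, 0)).2) • J0 v := by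
  rw [clm_prod_apply A v, clm_prod_apply A (J0 _)]
  ext <;>
    simp only [J0, hA, Prod.fst_add, Prod.snd_add, Prod.smul_fst, Prod.smul_snd, smul_eq_mul] <;>
    ring

theorem symm_of_apply_J0_apply_eq (h : ∀ v, A (J0 (A v)) = J0 v) :
    (A (1, 0)).2 = (A (0, 1)).1 := by
  have hJ : A (-(A (1, 0)).2, (A (1, 0)).1) = (0, 1) := by simpa [J0] using h (1, 0)
  rw [clm_prod_apply A (_, _), Prod.ext_iff] at hJ
  simp only [Prod.fst_add, Prod.snd_add, Prod.smul_fst, Prod.smul_snd, smul_eq_mul] at hJ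
  have hfst : (A (1, 0)).1 * ((A (0, 1)).1 - (A (1, 0)).2) = 0 := by linear_combination hJ.1
  have hsnd : (A (1, 0)).1 * (A (0, 1)).2 - (A (1, 0)).2 ^ 2 = 1 := by linear_combination hJ.2
  rcases mul_eq_zero.1 hfst with hzero | hsub
  · rw [hzero] at hsnd
    nlinarith
  · exact (sub_eq_zero.1 hsub).symm

theorem forall_apply_J0_apply_eq_iff :
    (∀ v, A (J0 (A v)) = J0 v) ↔ (A (1, 0)).2 = (A (0, 1)).1 ∧
      (A (1, 0)).1 * (A (0, 1)).2 - (A (0, 1)).1 * (A (1, 0)).2 = 1 := by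
  constructor
  · intro h
    have hsymm := symm_of_apply_J0_apply_eq h
    have hJ := (apply_J0_apply_of_symm hsymm (1, 0)).symm.trans (h (1, 0))
    exact ⟨hsymm, by simpa [J0] using congrArg Prod.snd hJ⟩
  · rintro ⟨hsymm, hdet⟩ v
    rw [apply_J0_apply_of_symm hsymm, hdet, one_smul]

end LinearAlgebra

theorem monge_ampere_eq_pseudoholomorphic_general
    {Ω : Set (ℝ × ℝ)} (hΩ : IsOpen Ω) [SimplyConnectedSpace Ω] {n : ℕ∞} (hn : n ≠ 0)
    {α : ℝ × ℝ → ℝ × ℝ} (hα : ContDiffOn ℝ n α Ω) :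
    ((∃ u : ℝ × ℝ → ℝ, ContDiffOn ℝ (n + 1) u Ω ∧
        (∀ p ∈ Ω, α p = (fderiv ℝ u p (1, 0), fderiv ℝ u p (0, 1))) ∧
        (∀ p ∈ Ω,
          (fderiv ℝ α p (1, 0)).1 * (fderiv ℝ α p (0, 1)).2 -
            (fderiv ℝ α p (0, 1)).1 * (fderiv ℝ α p (1, 0)).2 = 1)) ↔
      (∀ p ∈ Ω, ∀ v : ℝ × ℝ, fderiv ℝ α p (J0 (fderiv ℝ α p v)) = J0 v)) ∧
    ((∀ p ∈ Ω, ∀ v : ℝ × ℝ, fderiv ℝ α p (J0 (fderiv ℝ α p v)) = J0 v) ↔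
      (∀ p ∈ Ω, (fderiv ℝ α p (1, 0)).2 = (fderiv ℝ α p (0, 1)).1) ∧
      (∀ p ∈ Ω,
        (fderiv ℝ α p (1, 0)).1 * (fderiv ℝ α p (0, 1)).2 -
          (fderiv ℝ α p (0, 1)).1 * (fderiv ℝ α p (1, 0)).2 = 1)) := by
  simp only [forall_apply_J0_apply_eq_iff, imp_and, forall_and, and_true]
  rw [← exists_gradient_eq_iff hΩ hn hα]
  simp only [← and_assoc, exists_and_right]

theorem monge_ampere_eq_pseudoholomorphic
    (Ω : Set (ℝ × ℝ)) (hΩ : IsOpen Ω) (hsc : SimplyConnectedSpace Ω)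
    (α : ℝ × ℝ → ℝ × ℝ) (hα : ContDiffOn ℝ (⊤ : ℕ∞) α Ω) :
    -- α is the derivative of a smooth solution of det Hess u = 1 ...
    ((∃ u : ℝ × ℝ → ℝ, ContDiffOn ℝ (⊤ : ℕ∞) u Ω ∧
        (∀ p ∈ Ω, α p = (fderiv ℝ u p (1, 0), fderiv ℝ u p (0, 1))) ∧
        (∀ p ∈ Ω,
          (fderiv ℝ α p (1, 0)).1 * (fderiv ℝ α p (0, 1)).2 -
            (fderiv ℝ α p (0, 1)).1 * (fderiv ℝ α p (1, 0)).2 = 1)) ↔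
      -- ... iff the graph of α is a J-holomorphic curve, i.e. its tangent
      -- plane {(v, Dα v)} is invariant under J(x,y) = (J₀ y, J₀ x):
      (∀ p ∈ Ω, ∀ v : ℝ × ℝ, fderiv ℝ α p (J0 (fderiv ℝ α p v)) = J0 v)) ∧
    -- equivalently, J-holomorphicity holds iff α is closed and det Dα = 1:
    ((∀ p ∈ Ω, ∀ v : ℝ × ℝ, fderiv ℝ α p (J0 (fderiv ℝ α p v)) = J0 v) ↔
      (∀ p ∈ Ω, (fderiv ℝ α p (1, 0)).2 = (fderiv ℝ α p (0, 1)).1) ∧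
      (∀ p ∈ Ω,
        (fderiv ℝ α p (1, 0)).1 * (fderiv ℝ α p (0, 1)).2 -
          (fderiv ℝ α p (0, 1)).1 * (fderiv ℝ α p (1, 0)).2 = 1)) := by
  exact monge_ampere_eq_pseudoholomorphic_general hΩ (by simp) hα
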